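/- Let f_q(v) = v^{binom(k,2)} * prod over 1 <= i <= k < j <= m of (v q^{m-i} - q^{m-j}), written as sum_i a_i(q) v^i. Then sum over p >= 0 of s_{(p^k)}(1, q, ..., q^{m-1}) t^p = (prod over m-k <= i < m, 0 <= j < m-k of 1/(q^i - q^j)) * sum_i a_i(q)/(1 - q^i t), as an identity of formal power series in t. -/

import Mathlib

open Finset
open scoped Classical

noncomputable section

/-- Cells of the skew Young diagram `lam / mu` (0-indexed: cell `(i,j)` with `mu i ≤ j < lam i`). -/
def skewCells (lam mu : ℕ →₀ ℕ) : Finset (ℕ × ℕ) :=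
  lam.support.biUnion fun i =>
    ((Finset.range (lam i)).filter fun j => mu i ≤ j).image fun j => (i, j)

/-- A finitely supported function is a partition if it is antitone. -/
def IsPartition (l : ℕ →₀ ℕ) : Prop := ∀ i j : ℕ, i ≤ j → l j ≤ l i

/-- The type of all integer partitions. -/
def Ptn : Type := {l : ℕ →₀ ℕ // IsPartition l}

/-- Semistandard condition: rows weakly increase, columns strictly increase. -/
def IsSSYT (lam mu : ℕ →₀ ℕ) (n : ℕ) (T : skewCells lam mu → Fin n) : Prop :=
  ∀ c c' : skewCells lam mu,
    ((c : ℕ × ℕ).1 = (c' : ℕ × ℕ).1 → (c : ℕ × ℕ).2 ≤ (c' : ℕ × ℕ).2 → T c ≤ T c') ∧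
    ((c : ℕ × ℕ).2 = (c' : ℕ × ℕ).2 → (c : ℕ × ℕ).1 < (c' : ℕ × ℕ).1 → T c < T c')

/-- The (skew) Schur polynomial `s_{lam/mu}` in `n` variables, evaluated at `u`. -/
def skewSchur {R : Type*} [CommSemiring R] (n : ℕ) (lam mu : ℕ →₀ ℕ) (u : Fin n → R) : R :=
  ∑ T ∈ Finset.univ.filter (IsSSYT lam mu n), ∏ c : skewCells lam mu, u (T c)

/-- The number of standard Young tableaux of an arbitrary (truncated) diagram `D`:
bijective fillings increasing along rows and down columns. -/
def sytCard (D : Finset (ℕ × ℕ)) : ℕ :=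
  (Finset.univ.filter fun T : D → Fin D.card => Function.Bijective T ∧
    ∀ c c' : D, ((c : ℕ × ℕ).1 = (c' : ℕ × ℕ).1 → (c : ℕ × ℕ).2 < (c' : ℕ × ℕ).2 → T c < T c') ∧
      ((c : ℕ × ℕ).2 = (c' : ℕ × ℕ).2 → (c : ℕ × ℕ).1 < (c' : ℕ × ℕ).1 → T c < T c')).card

/-- Complete homogeneous symmetric polynomial of degree `s` in `p` variables, evaluated at `u`. -/
def hpoly {R : Type*} [CommSemiring R] (p s : ℕ) (u : Fin p → R) : R :=
  ∑ f ∈ Finset.univ.filter (fun f : Fin s → Fin p => Monotone f), ∏ t, u (f t)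

/-- The rectangular partition `(p^k)`. -/
def rectPtn (k p : ℕ) : ℕ →₀ ℕ :=
  Finsupp.onFinset (Finset.range k) (fun i => if i < k then p else 0)
    (fun a ha => by
      simp only [Finset.mem_range]
      by_contra h
      simp [h] at ha)

/-- Plane partition of shape `D`: supported on `D`, weakly decreasing along rows and columns. -/
def IsPPofShape (D : Finset (ℕ × ℕ)) (T : ℕ × ℕ → ℕ) : Prop :=
  (∀ c, c ∉ D → T c = 0) ∧ ∀ c ∈ D, ∀ c' ∈ D,
    (c.1 = c'.1 → c.2 ≤ c'.2 → T c' ≤ T c) ∧ (c.2 = c'.2 → c.1 ≤ c'.1 → T c' ≤ T c)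


/-- Semistandard fillings of an arbitrary diagram. -/
def SSTab (D : Finset (ℕ × ℕ)) (n : ℕ) (T : D → Fin n) : Prop :=
  ∀ c c' : D,
    ((c : ℕ × ℕ).1 = (c' : ℕ × ℕ).1 → (c : ℕ × ℕ).2 ≤ (c' : ℕ × ℕ).2 → T c ≤ T c') ∧
    ((c : ℕ × ℕ).2 = (c' : ℕ × ℕ).2 → (c : ℕ × ℕ).1 < (c' : ℕ × ℕ).1 → T c < T c')

def SS {R : Type*} [CommRing R] (D : Finset (ℕ × ℕ)) (n : ℕ) (x : Fin n → R) : R :=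
  ∑ T ∈ Finset.univ.filter (SSTab D n), ∏ c : D, x (T c)

lemma skewSchur_eq_SS {R : Type*} [CommRing R] (n : ℕ) (lam mu : ℕ →₀ ℕ) (u : Fin n → R) :
    skewSchur n lam mu u = SS (skewCells lam mu) n u := rfl

/-- `D \ E` can be filled with the largest letter. -/
def StripCond (D E : Finset (ℕ × ℕ)) : Prop :=
  ∀ c ∈ D, c ∉ E → ∀ c' ∈ D, (c.1 = c'.1 → c.2 ≤ c'.2 → c' ∉ E) ∧ ¬ (c.2 = c'.2 ∧ c.1 < c'.1)

def preT (D : Finset (ℕ × ℕ)) (n : ℕ) (T : D → Fin (n + 1)) : Finset (ℕ × ℕ) :=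
  D.filter fun c => ∃ h : c ∈ D, T ⟨c, h⟩ ≠ Fin.last n

def extT (D E : Finset (ℕ × ℕ)) (n : ℕ) (U : E → Fin n) : D → Fin (n + 1) :=
  fun c => if h : (c : ℕ × ℕ) ∈ E then (U ⟨c, h⟩).castSucc else Fin.last n

lemma extT_mem {D E : Finset (ℕ × ℕ)} {n : ℕ} (U : E → Fin n) {c : ℕ × ℕ} (hc : c ∈ D)
    (h : c ∈ E) : extT D E n U ⟨c, hc⟩ = (U ⟨c, h⟩).castSucc := by
  simp [extT, h]

lemma extT_not_mem {D E : Finset (ℕ × ℕ)} {n : ℕ} (U : E → Fin n) {c : ℕ × ℕ} (hc : c ∈ D)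
    (h : c ∉ E) : extT D E n U ⟨c, hc⟩ = Fin.last n := by
  simp [extT, h]

lemma prod_extT {R : Type*} [CommRing R] {D E : Finset (ℕ × ℕ)} {n : ℕ} (hE : E ⊆ D)
    (x : Fin (n + 1) → R) (U : E → Fin n) :
    ∏ c : D, x (extT D E n U c) =
      x (Fin.last n) ^ (D.card - E.card) * ∏ c : E, x (U c).castSucc := by
  have h1 : ∏ c : D, x (extT D E n U c) =
      ∏ c ∈ D, if h : c ∈ E then x (U ⟨c, h⟩).castSucc else x (Fin.last n) := by
    rw [← Finset.prod_coe_sort D]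
    refine Finset.prod_congr rfl fun c _ => ?_
    unfold extT
    split_ifs <;> rfl
  rw [h1, ← Finset.prod_sdiff hE]
  congr 1
  · rw [← Finset.card_sdiff_of_subset hE]
    refine (Finset.prod_congr rfl fun c hc => ?_).trans (Finset.prod_const _)
    rw [dif_neg (Finset.mem_sdiff.1 hc).2]
  · rw [← Finset.prod_coe_sort E]
    refine Finset.prod_congr rfl fun c _ => ?_
    simp

lemma SSTab_extT {D E : Finset (ℕ × ℕ)} {n : ℕ} (hs : StripCond D E) (U : E → Fin n)
    (hU : SSTab E n U) : SSTab D (n + 1) (extT D E n U) := by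
  rintro ⟨c, hc⟩ ⟨c', hc'⟩
  by_cases h : c ∈ E <;> by_cases h' : c' ∈ E
  · rw [extT_mem U hc h, extT_mem U hc' h']
    simpa using hU ⟨c, h⟩ ⟨c', h'⟩
  · rw [extT_mem U hc h, extT_not_mem U hc' h']
    exact ⟨fun _ _ => Fin.le_last _, fun _ _ => Fin.castSucc_lt_last _⟩
  · have := hs c hc h c' hc'
    exact ⟨fun a b => absurd h' (this.1 a b), fun a b => absurd ⟨a, b⟩ this.2⟩
  · have := hs c hc h c' hc'
    rw [extT_not_mem U hc h, extT_not_mem U hc' h']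
    exact ⟨fun a b => le_rfl, fun a b => absurd ⟨a, b⟩ this.2⟩

lemma preT_extT {D E : Finset (ℕ × ℕ)} {n : ℕ} (hE : E ⊆ D) (U : E → Fin n) :
    preT D n (extT D E n U) = E := by
  ext c
  simp only [preT, Finset.mem_filter]
  constructor
  · rintro ⟨hc, _, h⟩
    by_contra hn
    exact h (extT_not_mem U hc hn)
  · intro h
    refine ⟨hE h, hE h, ?_⟩
    rw [extT_mem U (hE h) h]
    exact (Fin.castSucc_lt_last _).ne

lemma stripCond_preT {D : Finset (ℕ × ℕ)} {n : ℕ} (T : D → Fin (n + 1)) (hT : SSTab D (n + 1) T) :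
    StripCond D (preT D n T) := by
  intro c hc hcE c' hc'
  have h1 : T ⟨c, hc⟩ = Fin.last n := by
    by_contra h
    exact hcE (by simp only [preT, Finset.mem_filter]; exact ⟨hc, hc, h⟩)
  constructor
  · intro a b h'
    simp only [preT, Finset.mem_filter] at h'
    obtain ⟨_, _, h'⟩ := h'
    have := (hT ⟨c, hc⟩ ⟨c', hc'⟩).1 a b
    rw [h1] at this
    exact h' (Fin.last_le_iff.1 this)
  · rintro ⟨a, b⟩
    have := (hT ⟨c, hc⟩ ⟨c', hc'⟩).2 a b
    rw [h1] at this
    exact absurd this (not_lt.2 (Fin.le_last _))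

lemma SS_fiber {R : Type*} [CommRing R] {D E : Finset (ℕ × ℕ)} {n : ℕ} (hE : E ⊆ D)
    (hs : StripCond D E) (x : Fin (n + 1) → R) :
    ∑ T ∈ (Finset.univ.filter (SSTab D (n + 1))).filter (fun T => preT D n T = E),
      ∏ c : D, x (T c) =
    x (Fin.last n) ^ (D.card - E.card) * SS E n (fun i => x i.castSucc) := by
  rw [SS, Finset.mul_sum]
  symm
  refine Finset.sum_bij (fun U _ => extT D E n U) ?_ ?_ ?_ ?_
  · intro U hU
    simp only [Finset.mem_filter, Finset.mem_univ, true_and] at hU ⊢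
    exact ⟨SSTab_extT hs U hU, preT_extT hE U⟩
  · intro U _ U' _ h
    funext ⟨c, hc⟩
    have := congrFun h ⟨c, hE hc⟩
    rw [extT_mem U _ hc, extT_mem U' _ hc] at this
    exact Fin.castSucc_injective _ this
  · intro T hT
    simp only [Finset.mem_filter, Finset.mem_univ, true_and] at hT
    obtain ⟨hT, hp⟩ := hT
    have hne : ∀ c : E, T ⟨c, hE c.2⟩ ≠ Fin.last n := by
      rintro ⟨c, hc⟩
      have hc2 := hc
      rw [← hp] at hc2
      simp only [preT, Finset.mem_filter] at hc2
      exact hc2.2.2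
    refine ⟨fun c => (T ⟨c, hE c.2⟩).castPred (hne c), ?_, ?_⟩
    · simp only [Finset.mem_filter, Finset.mem_univ, true_and]
      intro c c'
      have := hT ⟨c, hE c.2⟩ ⟨c', hE c'.2⟩
      simpa using this
    · funext ⟨c, hc⟩
      by_cases h : c ∈ E
      · rw [extT_mem _ hc h]; simp
      · rw [extT_not_mem _ hc h]
        by_contra hh
        apply h
        rw [← hp]
        simp only [preT, Finset.mem_filter]
        exact ⟨hc, hc, fun h => hh h.symm⟩
  · intro U _
    rw [prod_extT hE]

lemma SS_branch {R : Type*} [CommRing R] (D : Finset (ℕ × ℕ)) (n : ℕ) (x : Fin (n + 1) → R) :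
    SS D (n + 1) x = ∑ E ∈ D.powerset.filter (StripCond D),
      x (Fin.last n) ^ (D.card - E.card) * SS E n (fun i => x i.castSucc) := by
  rw [SS, ← Finset.sum_fiberwise_of_maps_to (t := D.powerset.filter (StripCond D))
    (g := preT D n)]
  · refine Finset.sum_congr rfl fun E hE => ?_
    rw [Finset.mem_filter, Finset.mem_powerset] at hE
    exact SS_fiber hE.1 hE.2 x
  · intro T hT
    rw [Finset.mem_filter] at hT
    rw [Finset.mem_filter, Finset.mem_powerset]
    exact ⟨Finset.filter_subset _ _, stripCond_preT T hT.2⟩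

/-- Diagram whose row `r` has length `lam (n - 1 - r)`. -/
def Dg {n : ℕ} (lam : Fin n → ℕ) : Finset (ℕ × ℕ) :=
  Finset.univ.biUnion fun i : Fin n => (Finset.range (lam i)).image fun j => (n - 1 - (i : ℕ), j)

lemma mem_Dg {n : ℕ} (lam : Fin n → ℕ) (r c : ℕ) :
    (r, c) ∈ Dg lam ↔ ∃ i : Fin n, r + i + 1 = n ∧ c < lam i := by
  simp only [Dg, Finset.mem_biUnion, Finset.mem_univ, true_and, Finset.mem_image, Finset.mem_range,
    Prod.mk.injEq]
  constructor
  · rintro ⟨i, j, h1, h2, h3⟩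
    exact ⟨i, by have := i.2; omega, h3 ▸ h1⟩
  · rintro ⟨i, h1, h2⟩
    exact ⟨i, c, h2, by omega, rfl⟩

lemma card_Dg {n : ℕ} (lam : Fin n → ℕ) : (Dg lam).card = ∑ i, lam i := by
  rw [Dg, Finset.card_biUnion]
  · refine Finset.sum_congr rfl fun i _ => ?_
    rw [Finset.card_image_of_injective, Finset.card_range]
    intro a b h
    simpa using h
  · intro i _ j _ hij
    rw [Function.onFun, Finset.disjoint_left]
    rintro ⟨a, b⟩ h1 h2
    simp only [Finset.mem_image, Finset.mem_range, Prod.mk.injEq] at h1 h2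
    obtain ⟨_, _, h1, _⟩ := h1
    obtain ⟨_, _, h2, _⟩ := h2
    apply hij
    ext
    have := i.2
    have := j.2
    omega

lemma Dg_inj {n : ℕ} {lam mu : Fin n → ℕ} (h : Dg lam = Dg mu) : lam = mu := by
  have key : ∀ (lam mu : Fin n → ℕ), Dg lam = Dg mu → ∀ i, lam i ≤ mu i := by
    intro lam mu h i
    by_contra hc
    push Not at hc
    have h1 : (n - 1 - (i : ℕ), mu i) ∈ Dg lam :=
      (mem_Dg _ _ _).2 ⟨i, by have := i.2; omega, hc⟩
    rw [h, mem_Dg] at h1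
    obtain ⟨j, hj, hlt⟩ := h1
    have : j = i := by ext; have := i.2; omega
    subst this
    exact lt_irrefl _ hlt
  funext i
  exact le_antisymm (key _ _ h i) (key _ _ h.symm i)

lemma lower_eq_range (s : Finset ℕ) (h : ∀ a b, a ≤ b → b ∈ s → a ∈ s) :
    s = Finset.range s.card := by
  have hsub : s ⊆ Finset.range s.card := by
    intro b hb
    have : Finset.range (b + 1) ⊆ s := fun a ha =>
      h a b (by have := Finset.mem_range.1 ha; omega) hb
    have := Finset.card_le_card this
    rw [Finset.card_range] at this
    exact Finset.mem_range.2 (by omega)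
  exact Finset.eq_of_subset_of_card_le hsub (by simp)

lemma strip_is_Dg {n : ℕ} {lam : Fin (n + 1) → ℕ} (hl : Monotone lam) {E : Finset (ℕ × ℕ)}
    (hE : E ⊆ Dg lam) (hs : StripCond (Dg lam) E) (U : E → Fin n) (hU : SSTab E n U) :
    ∃ mu ∈ Fintype.piFinset (fun i : Fin n => Finset.Icc (lam i.castSucc) (lam i.succ)),
      Dg mu = E := by
  have hrow : ∀ r a b, a ≤ b → (r, b) ∈ E → (r, a) ∈ E := by
    intro r a b hab hb
    by_contra h
    obtain ⟨i, hi, hlt⟩ := (mem_Dg _ _ _).1 (hE hb)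
    exact (hs (r, a) ((mem_Dg _ _ _).2 ⟨i, hi, by omega⟩) h (r, b) (hE hb)).1 rfl hab hb
  have hcol : ∀ r c, (r + 1, c) ∈ Dg lam → (r, c) ∈ E := by
    intro r c hc
    by_contra h
    obtain ⟨i, hi, hlt⟩ := (mem_Dg _ _ _).1 hc
    have hi1 : (i : ℕ) + 1 < n + 1 := by omega
    refine (hs (r, c) ((mem_Dg _ _ _).2 ⟨⟨i + 1, hi1⟩, by simp only; omega, ?_⟩) h _ hc).2
      ⟨rfl, by simp⟩
    exact lt_of_lt_of_le hlt (hl (by rw [Fin.le_def]; simp))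
  have hge : ∀ r c (h : (r, c) ∈ E), r ≤ (U ⟨(r, c), h⟩ : ℕ) := by
    intro r
    induction r with
    | zero => intros; omega
    | succ r ih =>
      intro c h
      have h' := hcol r c (hE h)
      have h2 := (hU ⟨_, h'⟩ ⟨_, h⟩).2 rfl (by simp)
      have h3 := ih c h'
      rw [Fin.lt_def] at h2
      omega
  let row : ℕ → Finset ℕ := fun r => (E.filter fun c => c.1 = r).image Prod.snd
  have mem_row : ∀ r c, c ∈ row r ↔ (r, c) ∈ E := by
    intro r c
    simp [row]
  have hrng : ∀ r c, (r, c) ∈ E ↔ c < (row r).card := by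
    intro r c
    have := lower_eq_range (row r) (by
      intro a b hab hb
      rw [mem_row] at *
      exact hrow r a b hab hb)
    rw [← mem_row]
    conv_lhs => rw [this]
    rw [Finset.mem_range]
  refine ⟨fun i => (row (n - 1 - i)).card, ?_, ?_⟩
  · rw [Fintype.mem_piFinset]
    intro i
    have hi2 := i.2
    rw [Finset.mem_Icc]
    constructor
    · by_contra hc
      push Not at hc
      have h1 : (n - 1 - (i : ℕ) + 1, (row (n - 1 - i)).card) ∈ Dg lam :=
        (mem_Dg _ _ _).2 ⟨i.castSucc, by simp only [Fin.val_castSucc]; omega, hc⟩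
      have h2 := (hrng _ _).1 (hcol _ _ h1)
      exact lt_irrefl _ h2
    · by_contra hc
      push Not at hc
      have h2 := (hrng _ _).2 hc
      obtain ⟨j, hj, hlt⟩ := (mem_Dg _ _ _).1 (hE h2)
      have : j = i.succ := by ext; simp only [Fin.val_succ]; omega
      subst this
      exact lt_irrefl _ hlt
  · ext ⟨r, c⟩
    rw [mem_Dg]
    constructor
    · rintro ⟨i, hi, hlt⟩
      have : n - 1 - (i : ℕ) = r := by omega
      rw [this] at hlt
      exact (hrng _ _).2 hlt
    · intro h
      have h1 := hge r c h
      have h2 := (U ⟨(r, c), h⟩).2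
      refine ⟨⟨n - 1 - r, by omega⟩, by simp only; omega, ?_⟩
      have : n - 1 - (n - 1 - r) = r := by omega
      simp only [this]
      exact (hrng _ _).1 h

lemma Dg_strip {n : ℕ} {lam : Fin (n + 1) → ℕ} (hl : Monotone lam) {mu : Fin n → ℕ}
    (hmu : ∀ i, lam i.castSucc ≤ mu i ∧ mu i ≤ lam i.succ) :
    Dg mu ⊆ Dg lam ∧ StripCond (Dg lam) (Dg mu) := by
  constructor
  · rintro ⟨r, c⟩ h
    obtain ⟨i, hi, hlt⟩ := (mem_Dg _ _ _).1 h
    exact (mem_Dg _ _ _).2 ⟨i.succ, by simp only [Fin.val_succ]; omega,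
      lt_of_lt_of_le hlt (hmu i).2⟩
  · rintro ⟨r, c⟩ _ hn ⟨r', c'⟩ h'
    constructor
    · rintro h1 h2 hmem
      simp only at h1 h2
      subst h1
      obtain ⟨i, hi, hlt⟩ := (mem_Dg _ _ _).1 hmem
      exact hn ((mem_Dg _ _ _).2 ⟨i, hi, by omega⟩)
    · rintro ⟨h1, h2⟩
      simp only at h1 h2
      subst h1
      -- all cells strictly above a cell of the big diagram are in the small one
      obtain ⟨i, hi, hlt⟩ := (mem_Dg _ _ _).1 h'
      have hj : n - 1 - r < n := by omega
      refine hn ((mem_Dg _ _ _).2 ⟨⟨n - 1 - r, hj⟩, by simp only; omega, ?_⟩)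
      refine lt_of_lt_of_le (lt_of_lt_of_le hlt (hl ?_)) (hmu _).1
      rw [Fin.le_def]
      simp only [Fin.castSucc_mk]
      omega

lemma SS_Dg_branch {R : Type*} [CommRing R] {n : ℕ} {lam : Fin (n + 1) → ℕ} (hl : Monotone lam)
    (x : Fin (n + 1) → R) :
    SS (Dg lam) (n + 1) x =
      ∑ mu ∈ Fintype.piFinset (fun i : Fin n => Finset.Icc (lam i.castSucc) (lam i.succ)),
        x (Fin.last n) ^ (lam 0 + ∑ i : Fin n, (lam i.succ - mu i)) *
          SS (Dg mu) n (fun i => x i.castSucc) := by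
  rw [SS_branch]
  symm
  have h1 : ∀ mu ∈ Fintype.piFinset (fun i : Fin n => Finset.Icc (lam i.castSucc) (lam i.succ)),
      lam 0 + ∑ i : Fin n, (lam i.succ - mu i) = (Dg lam).card - (Dg mu).card := by
    intro mu hmu
    simp only [Fintype.mem_piFinset, Finset.mem_Icc] at hmu
    rw [card_Dg, card_Dg, Fin.sum_univ_succ]
    have h2 : ∑ i : Fin n, (lam i.succ - mu i) + ∑ i, mu i = ∑ i : Fin n, lam i.succ := by
      rw [← Finset.sum_add_distrib]
      exact Finset.sum_congr rfl fun i _ => Nat.sub_add_cancel (hmu i).2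
    omega
  rw [Finset.sum_congr rfl fun mu hmu => by rw [h1 mu hmu]]
  rw [← Finset.sum_image (f := fun E => x (Fin.last n) ^ ((Dg lam).card - E.card) *
    SS E n (fun i => x i.castSucc)) (g := Dg) (fun a _ b _ h => Dg_inj h)]
  refine Finset.sum_subset ?_ ?_
  · intro E hE
    obtain ⟨mu, hmu, rfl⟩ := Finset.mem_image.1 hE
    simp only [Fintype.mem_piFinset, Finset.mem_Icc] at hmu
    rw [Finset.mem_filter, Finset.mem_powerset]
    exact Dg_strip hl hmu
  · intro E hE hn
    rw [Finset.mem_filter, Finset.mem_powerset] at hE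
    rw [SS, Finset.sum_eq_zero, mul_zero]
    intro U hU
    exfalso
    apply hn
    obtain ⟨mu, hmu, h⟩ := strip_is_Dg hl hE.1 hE.2 U (Finset.mem_filter.1 hU).2
    exact Finset.mem_image.2 ⟨mu, hmu, h⟩

/-- The alternant. -/
def altDet {R : Type*} [CommRing R] {n : ℕ} (x : Fin n → R) (lam : Fin n → ℕ) : R :=
  Matrix.det (Matrix.of fun i j : Fin n => x j ^ (lam i + (i : ℕ)))

lemma geom_aux {R : Type*} [CommRing R] (x z : R) (a b s : ℕ) (hab : a ≤ b) :
    (x - z) * ∑ c ∈ Finset.Icc a b, z ^ (b - c) * x ^ (c + s) =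
      x ^ (b + (s + 1)) - z ^ (b + 1 - a) * x ^ (a + s) := by
  have h := (Commute.all x z).mul_geom_sum₂_Ico (m := a) (n := b + 1) (by omega)
  have h2 : ∑ c ∈ Finset.Icc a b, z ^ (b - c) * x ^ (c + s) =
      (∑ i ∈ Finset.Ico a (b + 1), x ^ i * z ^ (b + 1 - 1 - i)) * x ^ s := by
    rw [Finset.sum_mul]
    refine Finset.sum_congr (by ext; simp) fun c _ => ?_
    rw [Nat.add_sub_cancel]
    ring
  rw [h2, ← mul_assoc, h]
  ring

lemma altDet_branch {R : Type*} [CommRing R] {n : ℕ} {lam : Fin (n + 1) → ℕ} (hl : Monotone lam)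
    (x : Fin (n + 1) → R) :
    altDet x lam = (∏ j : Fin n, (x (Fin.last n) - x j.castSucc)) *
      ∑ mu ∈ Fintype.piFinset (fun i : Fin n => Finset.Icc (lam i.castSucc) (lam i.succ)),
        x (Fin.last n) ^ (lam 0 + ∑ i : Fin n, (lam i.succ - mu i)) *
          altDet (fun i => x i.castSucc) mu := by
  set z := x (Fin.last n) with hz
  let G : Fin n → Fin (n + 1) → R := fun i j =>
    ∑ c ∈ Finset.Icc (lam i.castSucc) (lam i.succ), z ^ (lam i.succ - c) * x j ^ (c + (i : ℕ))
  let B : Matrix (Fin (n + 1)) (Fin (n + 1)) R :=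
    Matrix.of (Fin.cons (fun j => x j ^ (lam 0)) fun i j => (x j - z) * G i j)
  have hB : altDet x lam = B.det := by
    unfold altDet
    refine Matrix.det_eq_of_forall_row_eq_smul_add_pred
      (fun i : Fin n => z ^ (lam i.succ + 1 - lam i.castSucc)) ?_ ?_
    · intro j
      simp [B]
    · intro i j
      have := geom_aux (x j) z (lam i.castSucc) (lam i.succ) i
        (hl (Fin.castSucc_lt_succ).le)
      simp only [B, Matrix.of_apply, Fin.cons_succ, G, this, Fin.val_succ, Fin.val_castSucc]
      ring
  rw [hB, Matrix.det_succ_column B (Fin.last n), Finset.sum_eq_single 0]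
  rotate_left
  · intro i _ hi
    obtain ⟨i, rfl⟩ := Fin.exists_succ_eq.2 hi
    simp [B, hz]
  · simp
  have hsub : B.submatrix (Fin.succAbove 0) (Fin.succAbove (Fin.last n)) =
      Matrix.of fun i j : Fin n => (x j.castSucc - z) * (Matrix.of fun i j : Fin n =>
        ∑ c ∈ Finset.Icc (lam i.castSucc) (lam i.succ),
          z ^ (lam i.succ - c) * x j.castSucc ^ (c + (i : ℕ))) i j := by
    ext i j
    simp [B, G]
  rw [hsub, Matrix.det_mul_row (fun j : Fin n => x j.castSucc - z)]
  have hdet : (Matrix.of fun i j : Fin n =>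
        ∑ c ∈ Finset.Icc (lam i.castSucc) (lam i.succ),
          z ^ (lam i.succ - c) * x j.castSucc ^ (c + (i : ℕ))).det =
      ∑ mu ∈ Fintype.piFinset (fun i : Fin n => Finset.Icc (lam i.castSucc) (lam i.succ)),
        z ^ (∑ i : Fin n, (lam i.succ - mu i)) * altDet (fun i => x i.castSucc) mu := by
    have h := (Matrix.detRowAlternating (R := R) (n := Fin n)).toMultilinearMap.map_sum_finset
      (fun (i : Fin n) (c : ℕ) => fun j : Fin n =>
          z ^ (lam i.succ - c) * x j.castSucc ^ (c + (i : ℕ)))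
      (fun i : Fin n => Finset.Icc (lam i.castSucc) (lam i.succ))
    have e1 : (Matrix.of fun i j : Fin n =>
        ∑ c ∈ Finset.Icc (lam i.castSucc) (lam i.succ),
          z ^ (lam i.succ - c) * x j.castSucc ^ (c + (i : ℕ))) =
        fun i : Fin n => ∑ c ∈ Finset.Icc (lam i.castSucc) (lam i.succ), fun j : Fin n =>
          z ^ (lam i.succ - c) * x j.castSucc ^ (c + (i : ℕ)) := by
      funext i j
      simp [Finset.sum_apply]
    rw [e1]
    refine h.trans (Finset.sum_congr rfl fun mu _ => ?_)
    rw [← Finset.prod_pow_eq_pow_sum, altDet, ← Matrix.det_mul_column]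
    rfl
  rw [hdet]
  have hs : ∏ j : Fin n, (z - x j.castSucc) = (-1) ^ n * ∏ j : Fin n, (x j.castSucc - z) := by
    rw [← Fin.prod_const, ← Finset.prod_mul_distrib]
    exact Finset.prod_congr rfl fun _ _ => by ring
  rw [hs]
  simp only [pow_add, mul_assoc]
  rw [← Finset.mul_sum]
  simp [B, ← hz]
  ring

lemma altDet_zero_succ {R : Type*} [CommRing R] {n : ℕ} (x : Fin (n + 1) → R) :
    altDet x 0 = (∏ j : Fin n, (x (Fin.last n) - x j.castSucc)) *
      altDet (fun i => x i.castSucc) 0 := by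
  rw [altDet_branch (lam := 0) monotone_const]
  congr 1
  rw [Finset.sum_eq_single 0]
  · simp
  · intro mu hmu hne
    exfalso
    apply hne
    simp only [Fintype.mem_piFinset, Finset.mem_Icc] at hmu
    funext i
    have := (hmu i).2
    simpa using this
  · intro h
    exfalso
    apply h
    rw [Fintype.mem_piFinset]
    intro i
    simp

theorem bialternant {R : Type*} [CommRing R] {n : ℕ} {lam : Fin n → ℕ} (hl : Monotone lam)
    (x : Fin n → R) : SS (Dg lam) n x * altDet x 0 = altDet x lam := by
  induction n with
  | zero =>
    have h0 : Dg lam = ∅ := by simp [Dg]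
    rw [h0]
    have : (Finset.univ.filter (SSTab ∅ 0)) = Finset.univ := by
      ext T
      simp [SSTab]
    rw [SS, this]
    simp [altDet]
  | succ n ih =>
    rw [SS_Dg_branch hl, altDet_branch hl, altDet_zero_succ, mul_left_comm, Finset.sum_mul]
    congr 1
    refine Finset.sum_congr rfl fun mu hmu => ?_
    simp only [Fintype.mem_piFinset, Finset.mem_Icc] at hmu
    have hm : Monotone mu := by
      intro i j hij
      rcases hij.eq_or_lt with rfl | hij
      · rfl
      · refine (hmu i).2.trans ((hl ?_).trans (hmu j).1)
        rw [Fin.le_def, Fin.val_succ, Fin.val_castSucc]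
        exact hij
    rw [mul_assoc, ih hm]

lemma altDet_q {R : Type*} [CommRing R] {n : ℕ} (q : R) (lam : ℕ → ℕ) :
    altDet (fun i : Fin n => q ^ (i : ℕ)) (fun i => lam i) =
      ∏ j ∈ Finset.range n, ∏ i ∈ Finset.range j, (q ^ (lam j + j) - q ^ (lam i + i)) := by
  have : (Matrix.of fun i j : Fin n => (q ^ (j : ℕ)) ^ (lam i + (i : ℕ))) =
      Matrix.vandermonde (fun i : Fin n => q ^ (lam i + (i : ℕ))) := by
    ext i j
    simp only [Matrix.of_apply, Matrix.vandermonde_apply, ← pow_mul]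
    rw [mul_comm]
  rw [altDet, this, Matrix.det_vandermonde, Finset.prod_comm' (t' := Finset.univ) (s' := Finset.Iio),
    ← Fin.prod_univ_eq_prod_range
      (fun j => ∏ i ∈ Finset.range j, (q ^ (lam j + j) - q ^ (lam i + i)))]
  · refine Finset.prod_congr rfl fun j _ => ?_
    have h2 : Finset.range (j : ℕ) = (Finset.Iio j).map Fin.valEmbedding := by
      rw [Fin.map_valEmbedding_Iio]; ext; simp
    rw [h2, Finset.prod_map]
    rfl
  · intro i j; simp

lemma split_prod {R : Type*} [CommRing R] (F : ℕ → ℕ → R) (a k : ℕ) :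
    ∏ j ∈ Finset.range (a + k), ∏ i ∈ Finset.range j, F i j =
      (∏ j ∈ Finset.range a, ∏ i ∈ Finset.range j, F i j) *
      ((∏ j ∈ Finset.range k, ∏ i ∈ Finset.range a, F i (a + j)) *
        ∏ j ∈ Finset.range k, ∏ i ∈ Finset.range j, F (a + i) (a + j)) := by
  rw [Finset.prod_range_add, ← Finset.prod_mul_distrib]
  congr 1
  refine Finset.prod_congr rfl fun j _ => ?_
  rw [Finset.prod_range_add]

lemma rect_cells (a k p : ℕ) : skewCells (rectPtn k p) 0 =
    Dg (fun i : Fin (a + k) => if (i : ℕ) < a then 0 else p) := by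
  ext ⟨r, c⟩
  rw [mem_Dg]
  simp only [skewCells, rectPtn, Finset.mem_biUnion, Finsupp.mem_support_iff, Finset.mem_image,
    Finset.mem_filter, Finset.mem_range, Finsupp.onFinset_apply, Prod.mk.injEq]
  constructor
  · rintro ⟨i, h1, j, ⟨h2, _⟩, rfl, rfl⟩
    by_cases hi : i < k
    · rw [if_pos hi] at h2
      refine ⟨⟨a + k - 1 - i, by omega⟩, by simp only; omega, ?_⟩
      rw [if_neg (by simp only; omega)]
      exact h2
    · rw [if_neg hi] at h2; omega
  · rintro ⟨i, h1, h2⟩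
    by_cases hi : (i : ℕ) < a
    · rw [if_pos hi] at h2; omega
    · rw [if_neg hi] at h2
      have hr : r < k := by omega
      refine ⟨r, by rw [if_pos hr]; omega, c, ⟨by rw [if_pos hr]; exact h2, by simp⟩, rfl, rfl⟩

lemma pow_ne_of_lt {q : ℝ} (hq0 : 0 < q) (hq1 : q < 1) {i j : ℕ} (h : i < j) :
    q ^ j - q ^ i ≠ 0 :=
  sub_ne_zero.2 (pow_lt_pow_right_of_lt_one₀ hq0 hq1 h).ne

lemma schur_rect (a k p : ℕ) (q : ℝ) (hq0 : 0 < q) (hq1 : q < 1) :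
    skewSchur (a + k) (rectPtn k p) 0 (fun i => q ^ (i : ℕ)) *
      (∏ j ∈ Finset.range k, ∏ i ∈ Finset.range a, (q ^ (a + j) - q ^ i)) =
    (q ^ p) ^ (k.choose 2) *
      (∏ j ∈ Finset.range k, ∏ i ∈ Finset.range a, (q ^ (a + j) * q ^ p - q ^ i)) := by
  have hl : Monotone (fun i : Fin (a + k) => if (i : ℕ) < a then 0 else p) := by
    intro i j hij
    have : (i : ℕ) ≤ j := hij
    simp only
    split_ifs <;> omega
  have h := bialternant hl (fun i => q ^ (i : ℕ))
  rw [← rect_cells, ← skewSchur_eq_SS] at h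
  have e0 := altDet_q (n := a + k) q (fun _ => 0)
  have e1 := altDet_q (n := a + k) q (fun i => if i < a then 0 else p)
  rw [split_prod] at e0 e1
  have e0' : altDet (fun i : Fin (a + k) => q ^ (i : ℕ)) 0 = _ := e0
  rw [e0', e1] at h
  simp only [zero_add] at h
  have c1 : ∏ j ∈ Finset.range a, ∏ i ∈ Finset.range j,
      (q ^ ((if j < a then 0 else p) + j) - q ^ ((if i < a then 0 else p) + i)) =
      ∏ j ∈ Finset.range a, ∏ i ∈ Finset.range j, (q ^ j - q ^ i) := by
    refine Finset.prod_congr rfl fun j hj => Finset.prod_congr rfl fun i hi => ?_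
    rw [Finset.mem_range] at hi hj
    rw [if_pos hj, if_pos (by omega), zero_add, zero_add]
  have c2 : ∏ j ∈ Finset.range k, ∏ i ∈ Finset.range a,
      (q ^ ((if a + j < a then 0 else p) + (a + j)) - q ^ ((if i < a then 0 else p) + i)) =
      ∏ j ∈ Finset.range k, ∏ i ∈ Finset.range a, (q ^ (a + j) * q ^ p - q ^ i) := by
    refine Finset.prod_congr rfl fun j hj => Finset.prod_congr rfl fun i hi => ?_
    rw [Finset.mem_range] at hi hj
    rw [if_neg (by omega), if_pos (by omega), zero_add]
    ring
  have c3 : ∏ j ∈ Finset.range k, ∏ i ∈ Finset.range j,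
      (q ^ ((if a + j < a then 0 else p) + (a + j)) -
        q ^ ((if a + i < a then 0 else p) + (a + i))) =
      (q ^ p) ^ (k.choose 2) *
        ∏ j ∈ Finset.range k, ∏ i ∈ Finset.range j, (q ^ (a + j) - q ^ (a + i)) := by
    have : (q ^ p) ^ (k.choose 2) = ∏ j ∈ Finset.range k, ∏ i ∈ Finset.range j, q ^ p := by
      simp only [Finset.prod_const, Finset.card_range]
      rw [Finset.prod_pow_eq_pow_sum, Finset.sum_range_id, Nat.choose_two_right]
    rw [this, ← Finset.prod_mul_distrib]
    refine Finset.prod_congr rfl fun j hj => ?_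
    rw [← Finset.prod_mul_distrib]
    refine Finset.prod_congr rfl fun i hi => ?_
    rw [if_neg (by omega), if_neg (by omega)]
    ring
  rw [c1, c2, c3] at h
  have n1 : ∏ j ∈ Finset.range a, ∏ i ∈ Finset.range j, (q ^ j - q ^ i) ≠ 0 :=
    Finset.prod_ne_zero_iff.2 fun j _ => Finset.prod_ne_zero_iff.2 fun i hi =>
      pow_ne_of_lt hq0 hq1 (Finset.mem_range.1 hi)
  have n2 : ∏ j ∈ Finset.range k, ∏ i ∈ Finset.range j, (q ^ (a + j) - q ^ (a + i)) ≠ 0 :=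
    Finset.prod_ne_zero_iff.2 fun j _ => Finset.prod_ne_zero_iff.2 fun i hi =>
      pow_ne_of_lt hq0 hq1 (by have := Finset.mem_range.1 hi; omega)
  apply mul_left_cancel₀ (mul_ne_zero n1 n2)
  linear_combination h

/-- with `f_q(v) = v^{C(k,2)} ∏_{1 ≤ i ≤ k < j ≤ m} (v q^{m-i} - q^{m-j})
= ∑_i a_i(q) v^i`, one has
`∑_{p≥0} s_{(p^k)}(1,q,…,q^{m-1}) t^p
  = (∏_{m-k ≤ i < m, 0 ≤ j < m-k} 1/(q^i - q^j)) · ∑_i a_i(q)/(1 - q^i t)`. -/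
theorem stmt12 (m k : ℕ) (hk : 0 < k) (hkm : k ≤ m) (q t : ℝ)
    (hq0 : 0 < q) (hq1 : q < 1) (ht : |t| < 1) :
    (∑' p : ℕ, skewSchur m (rectPtn k p) 0 (fun i => q ^ (i : ℕ)) * t ^ p) =
      (∏ x ∈ (Finset.Icc (m - k) (m - 1)) ×ˢ (Finset.range (m - k)),
          (q ^ x.1 - q ^ x.2)⁻¹) *
        ∑ i ∈ Finset.range
            ((Polynomial.X ^ (k.choose 2) *
              ∏ x ∈ (Finset.Icc 1 k) ×ˢ (Finset.Icc (k + 1) m),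
                (Polynomial.C (q ^ (m - x.1)) * Polynomial.X -
                  Polynomial.C (q ^ (m - x.2)))).natDegree + 1),
          (Polynomial.X ^ (k.choose 2) *
              ∏ x ∈ (Finset.Icc 1 k) ×ˢ (Finset.Icc (k + 1) m),
                (Polynomial.C (q ^ (m - x.1)) * Polynomial.X -
                  Polynomial.C (q ^ (m - x.2)))).coeff i / (1 - q ^ i * t) := by
  obtain ⟨a, rfl⟩ : ∃ a, m = a + k := ⟨m - k, by omega⟩
  set f : Polynomial ℝ := Polynomial.X ^ (k.choose 2) *
              ∏ x ∈ (Finset.Icc 1 k) ×ˢ (Finset.Icc (k + 1) (a + k)),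
                (Polynomial.C (q ^ (a + k - x.1)) * Polynomial.X -
                  Polynomial.C (q ^ (a + k - x.2))) with hf
  have heval : ∀ v : ℝ, f.eval v = v ^ (k.choose 2) *
      ∏ j ∈ Finset.range k, ∏ i ∈ Finset.range a, (q ^ (a + j) * v - q ^ i) := by
    intro v
    rw [hf, Polynomial.eval_mul, Polynomial.eval_prod, ← Finset.prod_product']
    simp only [Polynomial.eval_pow, Polynomial.eval_X, Polynomial.eval_sub, Polynomial.eval_mul,
      Polynomial.eval_C]
    congr 1
    refine Finset.prod_bij' (fun x _ => (k - x.1, a + k - x.2))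
      (fun y _ => (k - y.1, a + k - y.2)) ?_ ?_ ?_ ?_ ?_
    · rintro ⟨i, j⟩ h
      simp only [Finset.mem_product, Finset.mem_Icc, Finset.mem_range] at h ⊢
      omega
    · rintro ⟨i, j⟩ h
      simp only [Finset.mem_product, Finset.mem_Icc, Finset.mem_range] at h ⊢
      omega
    · rintro ⟨i, j⟩ h
      simp only [Finset.mem_product, Finset.mem_Icc, Finset.mem_range, Prod.mk.injEq] at h ⊢
      omega
    · rintro ⟨i, j⟩ h
      simp only [Finset.mem_product, Finset.mem_Icc, Finset.mem_range, Prod.mk.injEq] at h ⊢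
      omega
    · rintro ⟨i, j⟩ h
      simp only [Finset.mem_product, Finset.mem_Icc] at h ⊢
      rw [show a + k - i = a + (k - i) by omega]
  have hden : ∏ x ∈ (Finset.Icc (a + k - k) (a + k - 1)) ×ˢ (Finset.range (a + k - k)),
      (q ^ x.1 - q ^ x.2)⁻¹ =
      (∏ j ∈ Finset.range k, ∏ i ∈ Finset.range a, (q ^ (a + j) - q ^ i))⁻¹ := by
    have e1 : a + k - k = a := Nat.add_sub_cancel a k
    have e2 : Finset.Icc a (a + k - 1) = Finset.Ico a (a + k) := by
      ext i
      rw [Finset.mem_Icc, Finset.mem_Ico]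
      omega
    rw [Finset.prod_inv_distrib, ← Finset.prod_product', e1, e2]
    congr 1
    refine Finset.prod_bij' (fun x _ => (x.1 - a, x.2)) (fun y _ => (a + y.1, y.2)) ?_ ?_ ?_ ?_ ?_
    · rintro ⟨i, j⟩ h
      simp only [Finset.mem_product, Finset.mem_Ico, Finset.mem_range] at h ⊢
      exact ⟨by omega, h.2⟩
    · rintro ⟨i, j⟩ h
      simp only [Finset.mem_product, Finset.mem_Ico, Finset.mem_range] at h ⊢
      exact ⟨⟨by omega, by omega⟩, h.2⟩
    · rintro ⟨i, j⟩ h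
      simp only [Finset.mem_product, Finset.mem_Ico] at h
      exact Prod.ext (by simp only; omega) rfl
    · rintro ⟨i, j⟩ h
      exact Prod.ext (by simp only; omega) rfl
    · rintro ⟨i, j⟩ h
      simp only [Finset.mem_product, Finset.mem_Ico] at h ⊢
      rw [show a + (i - a) = i by omega]
  rw [hden]
  set W := ∏ j ∈ Finset.range k, ∏ i ∈ Finset.range a, (q ^ (a + j) - q ^ i) with hW
  have hW0 : W ≠ 0 :=
    Finset.prod_ne_zero_iff.2 fun j _ => Finset.prod_ne_zero_iff.2 fun i hi =>
      pow_ne_of_lt hq0 hq1 (by have := Finset.mem_range.1 hi; omega)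
  have hterm : ∀ p : ℕ, skewSchur (a + k) (rectPtn k p) 0 (fun i => q ^ (i : ℕ)) * t ^ p =
      W⁻¹ * ∑ i ∈ Finset.range (f.natDegree + 1), f.coeff i * (q ^ i * t) ^ p := by
    intro p
    have h1 := schur_rect a k p q hq0 hq1
    rw [← heval, Polynomial.eval_eq_sum_range] at h1
    have h2 : ∑ i ∈ Finset.range (f.natDegree + 1), f.coeff i * (q ^ i * t) ^ p =
        (∑ i ∈ Finset.range (f.natDegree + 1), f.coeff i * (q ^ p) ^ i) * t ^ p := by
      rw [Finset.sum_mul]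
      refine Finset.sum_congr rfl fun i _ => ?_
      rw [mul_pow, ← pow_mul, ← pow_mul, mul_comm i p, mul_assoc]
    rw [← hW] at h1
    rw [h2, ← h1]
    field_simp
  have hsum : HasSum (fun p : ℕ => W⁻¹ *
      ∑ i ∈ Finset.range (f.natDegree + 1), f.coeff i * (q ^ i * t) ^ p)
      (W⁻¹ * ∑ i ∈ Finset.range (f.natDegree + 1), f.coeff i / (1 - q ^ i * t)) := by
    refine HasSum.mul_left _ (hasSum_sum fun i _ => ?_)
    rw [div_eq_mul_inv]
    refine HasSum.mul_left _ (hasSum_geometric_of_abs_lt_one ?_)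
    rw [abs_mul, abs_of_pos (pow_pos hq0 i)]
    have : q ^ i ≤ 1 := pow_le_one₀ hq0.le hq1.le
    nlinarith [abs_nonneg t]
  simp only [hterm]
  exact hsum.tsum_eq
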